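/- Let 0 < a ≤ 1/√2 and let k ≥ 2 be an integer. With H_k(1) as defined, det H_k(1) = a_k · a²(a²−1)·((1−a²)(1/2−a²) + 1/(4(k+1)²)), where a_k := [(1!·2!⋯(k−1)!)² · (2!·3!⋯(k+1)!) / (2^{k−1}·(k+2)!·(k+3)!⋯(2k+1)!)] · k(k+2). -/

import Mathlib

noncomputable section

/-- The entry function `g`: `g(0,0) = 2`, `g(m,0) = (m+2)/(m+1)` for `m ≥ 1`,
`g(0,n) = 2` for `n ≥ 1`, `g(m,n) = 2a²` for `m, n ≥ 1`. -/
def gfun (a : ℝ) : ℕ × ℕ → ℝ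
  | (0, 0) => 2
  | (m + 1, 0) => ((m : ℝ) + 3) / ((m : ℝ) + 2)
  | (0, _ + 1) => 2
  | (_ + 1, _ + 1) => 2 * a ^ 2

/-- The enumeration of the index set `S = {(0,0),(1,0),(0,1),(1,1),(2,0),(3,0),…,(k,0)}`. -/
def Sidx : ℕ → ℕ × ℕ
  | 0 => (0, 0)
  | 1 => (1, 0)
  | 2 => (0, 1)
  | 3 => (1, 1)
  | i + 4 => (i + 2, 0)

/-- The `(k+3)×(k+3)` matrix `H_k(1)` with entries `(1/2)·g(u+v)` for `u, v ∈ S`. -/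
def Hk1 (a : ℝ) (k : ℕ) : Matrix (Fin (k + 3)) (Fin (k + 3)) ℝ :=
  fun i j => (1 / 2) * gfun a (Sidx (i : ℕ) + Sidx (j : ℕ))

/-- The constant `a_k`. -/
def akConst (k : ℕ) : ℝ :=
  ((∏ i ∈ Finset.Icc 1 (k - 1), (Nat.factorial i : ℝ)) ^ 2 *
      (∏ i ∈ Finset.Icc 2 (k + 1), (Nat.factorial i : ℝ)) /
      (2 ^ (k - 1) * ∏ i ∈ Finset.Icc (k + 2) (2 * k + 1), (Nat.factorial i : ℝ))) *
    ((k : ℝ) * ((k : ℝ) + 2))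

/-!
Put `b = a²`. The two rows of `H_k(1)` indexed by `(0,1)` and `(1,1)` can be eliminated without
dividing, which leaves `b (1 - b)` times the determinant of a rank-two perturbation
`H + (1 - 2b) 1 1ᵀ - 2 (1 - b) e₀ e₀ᵀ` of the Hilbert matrix `H = (1 / (i + j + 1))`, up to a power
of `2`.

Expanding monomials in the shifted Legendre polynomials factors `H = C D Cᵀ` with `C` lower
triangular and `D = diag(2m + 1)`. In these coordinates `1` and `e₀` become `(2m + 1)` and
`((-1)ᵐ (2m + 1))`, since a Legendre polynomial takes the values `1` and `±1` at the endpoints of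
`[0, 1]`. So `D⁻¹` sends them to vectors with entries `±1`, and the rank-two determinant only
involves `∑ (2m + 1)` and `∑ (-1)ᵐ (2m + 1)`. All the identities about `C` are telescoping sums.
-/

open Finset Matrix
open scoped Nat

section RankTwo

variable {R n : Type*} [CommRing R] [Fintype n] [DecidableEq n]

lemma det_add_vecMulVec_add_vecMulVec {A : Matrix n n R} {u v x y : n → R}
    (hx : A *ᵥ x = u) (hy : A *ᵥ y = v) (u' v' : n → R) :
    (A + vecMulVec u u' + vecMulVec v v').det =
      A.det * ((1 + u' ⬝ᵥ x) * (1 + v' ⬝ᵥ y) - (u' ⬝ᵥ y) * (v' ⬝ᵥ x)) := by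
  have factor : A + vecMulVec u u' + vecMulVec v v' = A * (1 + (of ![x, y])ᵀ * of ![u', v']) := by
    have columns : (of ![x, y])ᵀ * of ![u', v'] = vecMulVec x u' + vecMulVec y v' := by
      ext i j
      simp [mul_apply, vecMulVec_apply]
    rw [columns, Matrix.mul_add, Matrix.mul_add, Matrix.mul_one, mul_vecMulVec, mul_vecMulVec,
      hx, hy, add_assoc]
  rw [factor, det_mul, det_one_add_mul_comm, det_fin_two]
  simp only [Matrix.add_apply, one_apply, mul_apply, transpose_apply, of_apply]
  simp [dotProduct]

lemma det_fromBlocks_mul_right {m : Type*} [Fintype m] [DecidableEq m] (A : Matrix m m R)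
    (B : Matrix m n R) (D : Matrix n n R) (W : Matrix n m R) :
    (fromBlocks A B (D * W) D).det = D.det * (A - B * W).det := by
  have factor : fromBlocks A B (D * W) D = fromBlocks 1 0 0 D * fromBlocks A B W 1 := by
    simp [fromBlocks_multiply]
  rw [factor, det_mul, det_fromBlocks_zero₂₁, det_one, one_mul, det_fromBlocks_one₂₂]

end RankTwo

section LegendreMoment

variable {K : Type*} [Field K]

/-- The product `∏_{l < m} (x - l) / (x + l + 1)`, the ratio of a falling to a rising factorial;
for natural `x` it is `x!² / ((x - m)! (x + m)!)` and vanishes when `m > x`. -/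
def pochhammerRatio (x : K) (m : ℕ) : K := ∏ l ∈ range m, (x - l) / (x + l + 1)

/-- The closed form of the moment `∫₀¹ tˣ Pₘ(t) dt` of the shifted Legendre polynomial `Pₘ`,
normalized by `Pₘ(1) = 1`. -/
def legendreMoment (x : K) (m : ℕ) : K := pochhammerRatio x m / (x + m + 1)

lemma pochhammerRatio_zero (x : K) : pochhammerRatio x 0 = 1 := prod_range_zero _

lemma pochhammerRatio_succ (x : K) (m : ℕ) :
    pochhammerRatio x (m + 1) = (x - m) * legendreMoment x m := by
  rw [pochhammerRatio, prod_range_succ, legendreMoment, pochhammerRatio]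
  ring

lemma pochhammerRatio_eq_mul_legendreMoment {x : K} {m : ℕ} (h : x + m + 1 ≠ 0) :
    pochhammerRatio x m = (x + m + 1) * legendreMoment x m :=
  (mul_div_cancel₀ _ h).symm

lemma pochhammerRatio_natCast_of_lt {i m : ℕ} (h : i < m) : pochhammerRatio (i : K) m = 0 :=
  prod_eq_zero (mem_range.2 h) (by simp)

lemma legendreMoment_natCast_of_lt {i m : ℕ} (h : i < m) : legendreMoment (i : K) m = 0 := by
  rw [legendreMoment, pochhammerRatio_natCast_of_lt h, zero_div]

variable [CharZero K]

lemma pochhammerRatio_natCast (i m : ℕ) :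
    pochhammerRatio (i : K) m = (i + m + 1) * legendreMoment (i : K) m :=
  pochhammerRatio_eq_mul_legendreMoment (by exact_mod_cast (i + m).succ_ne_zero)

lemma legendreMoment_self (m : ℕ) :
    legendreMoment (m : K) m = (m ! : K) ^ 2 / ((2 * m + 1)! : K) := by
  have falling : ∏ l ∈ range m, ((m : K) - l) = m ! := by
    rw [← Nat.descFactorial_self, Nat.descFactorial_eq_prod_range, Nat.cast_prod]
    exact prod_congr rfl fun l hl => (Nat.cast_sub (mem_range.1 hl).le).symm
  have rising : (m ! : K) * ∏ l ∈ range (m + 1), ((m : K) + l + 1) = (2 * m + 1)! := by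
    rw [show 2 * m + 1 = m + (m + 1) by ring, ← Nat.factorial_mul_ascFactorial,
      Nat.ascFactorial_eq_prod_range]
    push_cast
    simp only [add_right_comm]
  have factorial_ne : (m ! : K) ≠ 0 := by exact_mod_cast m.factorial_ne_zero
  rw [legendreMoment, pochhammerRatio, prod_div_distrib, falling, div_div, ← prod_range_succ,
    ← rising, sq, mul_div_mul_left _ _ factorial_ne]

lemma sum_odd_mul_legendreMoment {i n : ℕ} (hi : i < n) :
    ∑ m ∈ range n, (2 * m + 1) * legendreMoment (i : K) m = 1 := by
  have telescope (m : ℕ) : (2 * m + 1) * legendreMoment (i : K) m =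
      pochhammerRatio (i : K) m - pochhammerRatio (i : K) (m + 1) := by
    rw [pochhammerRatio_succ, pochhammerRatio_natCast]
    ring
  rw [sum_congr rfl fun m _ => telescope m, sum_range_sub', pochhammerRatio_zero,
    pochhammerRatio_natCast_of_lt hi, sub_zero]

lemma sum_alternating_odd_mul_legendreMoment {i n : ℕ} (hi : i < n) :
    ∑ m ∈ range n, (-1) ^ m * (2 * m + 1) * legendreMoment (i : K) m = if i = 0 then 1 else 0 := by
  rcases eq_or_ne i 0 with rfl | i_ne
  · rw [sum_eq_single_of_mem 0 (mem_range.2 hi) fun m _ hm => by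
      rw [legendreMoment_natCast_of_lt (Nat.pos_of_ne_zero hm), mul_zero]]
    simp [legendreMoment, pochhammerRatio_zero]
  · have telescope (m : ℕ) : i * ((-1) ^ m * (2 * m + 1) * legendreMoment (i : K) m) =
        (-1) ^ m * m * pochhammerRatio (i : K) m -
          (-1) ^ (m + 1) * (m + 1 : ℕ) * pochhammerRatio (i : K) (m + 1) := by
      rw [pochhammerRatio_succ, pochhammerRatio_natCast]
      push_cast
      ring
    rw [if_neg i_ne, ← mul_right_inj' (Nat.cast_ne_zero (R := K).2 i_ne), mul_sum,
      sum_congr rfl fun m _ => telescope m,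
      sum_range_sub' fun m : ℕ => (-1) ^ m * (m : K) * pochhammerRatio (i : K) m,
      pochhammerRatio_natCast_of_lt hi]
    simp

lemma sum_odd_mul_legendreMoment_mul_legendreMoment {i n : ℕ} (hi : i < n) (j : ℕ) :
    ∑ m ∈ range n, (2 * m + 1) * legendreMoment (i : K) m * legendreMoment (j : K) m =
      ((i : K) + j + 1)⁻¹ := by
  have telescope (m : ℕ) :
      ((i : K) + j + 1) * ((2 * m + 1) * legendreMoment (i : K) m * legendreMoment (j : K) m) =
        pochhammerRatio (i : K) m * pochhammerRatio (j : K) m -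
          pochhammerRatio (i : K) (m + 1) * pochhammerRatio (j : K) (m + 1) := by
    simp only [pochhammerRatio_succ, pochhammerRatio_natCast]
    ring
  refine eq_inv_of_mul_eq_one_right ?_
  rw [mul_sum, sum_congr rfl fun m _ => telescope m,
    sum_range_sub' fun m => pochhammerRatio (i : K) m * pochhammerRatio (j : K) m,
    pochhammerRatio_natCast_of_lt hi, pochhammerRatio_zero, pochhammerRatio_zero]
  simp

end LegendreMoment

section OddSums

variable {R : Type*} [CommRing R]

lemma sum_range_odd (n : ℕ) : ∑ m ∈ range n, (2 * (m : R) + 1) = n ^ 2 := by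
  induction n with
  | zero => simp
  | succ n ih =>
    rw [sum_range_succ, ih]
    push_cast
    ring

lemma sum_range_alternating_odd (n : ℕ) :
    ∑ m ∈ range n, (-1) ^ m * (2 * (m : R) + 1) = -(-1) ^ n * n := by
  induction n with
  | zero => simp
  | succ n ih =>
    rw [sum_range_succ, ih]
    push_cast
    ring

variable (R) (n : ℕ)

/-- The vector `(2m + 1)`, the inverse squared `L²` norms of the shifted Legendre polynomials. -/
def oddVec : Fin n → R := fun m => 2 * m + 1

/-- The vector `((-1)ᵐ)`, the values of the shifted Legendre polynomials at `0`. -/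
def signVec : Fin n → R := fun m => (-1) ^ (m : ℕ)

lemma oddVec_dotProduct_one : oddVec R n ⬝ᵥ 1 = n ^ 2 := by
  rw [dotProduct_one, ← sum_range_odd, sum_range]
  rfl

lemma sign_mul_oddVec_dotProduct_one : (signVec R n * oddVec R n) ⬝ᵥ 1 = -(-1) ^ n * n := by
  rw [dotProduct_one, ← sum_range_alternating_odd, sum_range]
  rfl

lemma oddVec_dotProduct_signVec : oddVec R n ⬝ᵥ signVec R n = -(-1) ^ n * n := by
  rw [← sign_mul_oddVec_dotProduct_one, dotProduct_one, dotProduct]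
  exact sum_congr rfl fun _ _ => mul_comm _ _

lemma sign_mul_oddVec_dotProduct_signVec : (signVec R n * oddVec R n) ⬝ᵥ signVec R n = n ^ 2 := by
  rw [← oddVec_dotProduct_one, dotProduct_one]
  refine sum_congr rfl fun m _ => ?_
  rw [Pi.mul_apply, mul_right_comm, signVec, ← mul_pow, neg_one_mul, neg_neg, one_pow, one_mul]

end OddSums

section Hilbert

variable (K : Type*) [Field K] (n : ℕ)

/-- The Hilbert matrix `(1 / (i + j + 1))`, with indices starting at `0`. -/
def hilbertMatrix : Matrix (Fin n) (Fin n) K := of fun i j => ((i : K) + j + 1)⁻¹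

/-- The lower triangular factor in the `LDLᵀ` decomposition of the Hilbert matrix: its entries are
the moments of the shifted Legendre polynomials. -/
def legendreMomentMatrix : Matrix (Fin n) (Fin n) K := of fun i m => legendreMoment (i : K) m

variable [CharZero K]

lemma legendreMomentMatrix_mulVec_oddVec : legendreMomentMatrix K n *ᵥ oddVec K n = 1 := by
  ext i
  rw [Pi.one_apply, ← sum_odd_mul_legendreMoment i.isLt, sum_range]
  simp only [mulVec, dotProduct, legendreMomentMatrix, of_apply, oddVec, mul_comm]

lemma legendreMomentMatrix_mulVec_sign_mul_oddVec :
    legendreMomentMatrix K (n + 1) *ᵥ (signVec K (n + 1) * oddVec K (n + 1)) = Pi.single 0 1 := by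
  ext i
  trans if (i : ℕ) = 0 then 1 else 0
  · rw [← sum_alternating_odd_mul_legendreMoment i.isLt, sum_range]
    simp only [mulVec, dotProduct, legendreMomentMatrix, of_apply, oddVec, signVec, Pi.mul_apply,
      mul_comm]
  · simp [Pi.single_apply]

lemma hilbertMatrix_eq_mul_diagonal_mul_transpose :
    hilbertMatrix K n =
      legendreMomentMatrix K n * diagonal (oddVec K n) * (legendreMomentMatrix K n)ᵀ := by
  ext i j
  rw [mul_apply, hilbertMatrix, of_apply,
    ← sum_odd_mul_legendreMoment_mul_legendreMoment i.isLt, sum_range]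
  simp only [mul_diagonal, transpose_apply, legendreMomentMatrix, of_apply, oddVec]
  exact sum_congr rfl fun m _ => by ring

lemma det_legendreMomentMatrix :
    (legendreMomentMatrix K n).det = ∏ m ∈ range n, (m ! : K) ^ 2 / ((2 * m + 1)! : K) := by
  have lower_triangular : (legendreMomentMatrix K n).IsLowerTriangular :=
    fun _ _ h => legendreMoment_natCast_of_lt (OrderDual.toDual_lt_toDual.1 h)
  rw [det_of_isLowerTriangular _ lower_triangular, prod_range]
  exact prod_congr rfl fun m _ => legendreMoment_self _

lemma det_hilbertMatrix :
    (hilbertMatrix K n).det =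
      ∏ m ∈ range n, (2 * (m : K) + 1) * ((m ! : K) ^ 2 / ((2 * m + 1)! : K)) ^ 2 := by
  rw [hilbertMatrix_eq_mul_diagonal_mul_transpose, det_mul, det_mul, det_transpose,
    det_diagonal, det_legendreMomentMatrix, prod_mul_distrib, prod_pow,
    prod_range fun m => 2 * (m : K) + 1]
  simp only [oddVec]
  ring

theorem det_hilbertMatrix_succ :
    (hilbertMatrix K (n + 1)).det = (sf n : K) ^ 4 / (sf (2 * n + 1) : K) := by
  rw [det_hilbertMatrix]
  induction n with
  | zero => simp
  | succ n ih =>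
    have factorial_ne : ((2 * n + 2)! : K) ≠ 0 := by
      exact_mod_cast (2 * n + 2).factorial_ne_zero
    have odd_ne : (2 * (n + 1) + 1 : K) ≠ 0 := by exact_mod_cast (2 * (n + 1)).succ_ne_zero
    rw [prod_range_succ, ih, Nat.superFactorial_succ n,
      show 2 * (n + 1) + 1 = 2 * n + 2 + 1 by ring, Nat.superFactorial_succ (2 * n + 2),
      Nat.superFactorial_succ (2 * n + 1), Nat.factorial_succ (2 * n + 2)]
    push_cast
    field_simp

theorem det_hilbertMatrix_add_smul_add_smul (s t : K) :
    (hilbertMatrix K (n + 1) + s • vecMulVec 1 1 +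
        t • vecMulVec (Pi.single 0 1) (Pi.single 0 1)).det =
      (hilbertMatrix K (n + 1)).det *
        (1 + (s + t) * (n + 1) ^ 2 + s * t * (n + 1) ^ 2 * ((n + 1) ^ 2 - 1)) := by
  set C := legendreMomentMatrix K (n + 1)
  set d := oddVec K (n + 1)
  set ε := signVec K (n + 1)
  have congruence : hilbertMatrix K (n + 1) + s • vecMulVec 1 1 +
      t • vecMulVec (Pi.single 0 1) (Pi.single 0 1) =
        C * (diagonal d + vecMulVec (s • d) d + vecMulVec (t • (ε * d)) (ε * d)) * Cᵀ := by
    rw [Matrix.mul_add, Matrix.mul_add, Matrix.add_mul, Matrix.add_mul,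
      ← hilbertMatrix_eq_mul_diagonal_mul_transpose, mul_vecMulVec, mul_vecMulVec, vecMulVec_mul,
      vecMulVec_mul, vecMul_transpose, vecMul_transpose, mulVec_smul, mulVec_smul,
      legendreMomentMatrix_mulVec_oddVec, legendreMomentMatrix_mulVec_sign_mul_oddVec,
      smul_vecMulVec, smul_vecMulVec]
  have solve_one : diagonal d *ᵥ (s • 1) = s • d := by
    ext m
    simp [mulVec_diagonal, mul_comm]
  have solve_sign : diagonal d *ᵥ (t • ε) = t • (ε * d) := by
    ext m
    simp only [mulVec_diagonal, Pi.smul_apply, Pi.mul_apply, smul_eq_mul]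
    ring
  rw [congruence, det_mul, det_mul, det_transpose,
    det_add_vecMulVec_add_vecMulVec solve_one solve_sign,
    hilbertMatrix_eq_mul_diagonal_mul_transpose, det_mul, det_mul, det_transpose]
  simp only [dotProduct_smul, smul_eq_mul]
  rw [oddVec_dotProduct_one, sign_mul_oddVec_dotProduct_one, oddVec_dotProduct_signVec,
    sign_mul_oddVec_dotProduct_signVec]
  have sign_sq : ((-1 : K) ^ (n + 1)) ^ 2 = 1 := by
    rw [← pow_mul, mul_comm, pow_mul, neg_one_sq, one_pow]
  push_cast
  linear_combination (-(C.det * (diagonal d).det * C.det * s * t * (n + 1) ^ 2)) * sign_sq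

end Hilbert

section Border

variable {R : Type*} [CommRing R] (b : R) (k : ℕ)

/-- The block of `H_k(1)` with rows `(0,0), …, (k,0)` and columns `(0,1), (1,1)`, for `b = a²`. -/
def borderBlock : Matrix (Fin (k + 1)) (Fin 2) R := of fun i c => if i = 0 ∧ c = 0 then 1 else b

/-- The block of `H_k(1)` with rows and columns `(0,1), (1,1)`, for `b = a²`. -/
def cornerBlock : Matrix (Fin 2) (Fin 2) R := !![1, b; b, b]

variable (R) in
/-- The solution `W` of `D W = Bᵀ`, where `D` is the corner block and `B` the border block. -/
def cornerSolution : Matrix (Fin 2) (Fin (k + 1)) R := of ![Pi.single 0 1, 1 - Pi.single 0 1]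

lemma det_cornerBlock : (cornerBlock b).det = b * (1 - b) := by
  rw [cornerBlock, det_fin_two_of]
  ring

lemma cornerBlock_mul_cornerSolution :
    cornerBlock b * cornerSolution R k = (borderBlock b k)ᵀ := by
  ext c i
  fin_cases c <;> by_cases hi : i = 0 <;>
    simp [cornerBlock, cornerSolution, borderBlock, mul_apply, hi]

lemma borderBlock_mul_cornerSolution :
    borderBlock b k * cornerSolution R k =
      b • vecMulVec 1 1 + (1 - b) • vecMulVec (Pi.single 0 1) (Pi.single 0 1) := by
  ext i j
  by_cases hi : i = 0 <;> by_cases hj : j = 0 <;>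
    simp [cornerSolution, borderBlock, mul_apply, vecMulVec_apply, hi, hj]

end Border

section BlockForm

lemma exists_equiv_Sidx {k : ℕ} (hk : 1 ≤ k) :
    ∃ e : Fin (k + 1) ⊕ Fin 2 ≃ Fin (k + 3),
      (∀ i, Sidx (e (.inl i)) = (↑i, 0)) ∧ ∀ c, Sidx (e (.inr c)) = (↑c, 1) := by
  let f : Fin (k + 1) ⊕ Fin 2 → Fin (k + 3)
    | .inl i => if (i : ℕ) < 2 then ⟨i, by omega⟩ else ⟨i + 2, by omega⟩
    | .inr c => ⟨c + 2, by omega⟩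
  have Sidx_inl : ∀ i, Sidx (f (.inl i)) = (↑i, 0)
    | ⟨0, _⟩ | ⟨1, _⟩ | ⟨_ + 2, _⟩ => by simp [f, Sidx]
  have Sidx_inr : ∀ c, Sidx (f (.inr c)) = (↑c, 1)
    | 0 | 1 => rfl
  have f_injective : Function.Injective f := by
    refine Function.Injective.of_comp (f := fun i : Fin (k + 3) => Sidx i) ?_
    rintro (i | c) (j | d) h <;>
      simp only [Function.comp_apply, Sidx_inl, Sidx_inr, Prod.mk.injEq, Fin.val_inj] at h <;>
      simp_all
  exact ⟨.ofBijective f ((Fintype.bijective_iff_injective_and_card f).2 ⟨f_injective, by simp⟩),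
    Sidx_inl, Sidx_inr⟩

lemma gfun_zero_right (a : ℝ) (m : ℕ) : gfun a (m, 0) = 1 + ((m : ℝ) + 1)⁻¹ := by
  cases m with
  | zero => norm_num [gfun]
  | succ m =>
    simp only [gfun]
    push_cast
    field_simp
    ring

lemma gfun_succ_right (a : ℝ) (m n : ℕ) :
    gfun a (m, n + 1) = 2 * if m = 0 then 1 else a ^ 2 := by
  cases m <;> simp [gfun]

lemma exists_Hk1_submatrix_eq_fromBlocks (a : ℝ) {k : ℕ} (hk : 1 ≤ k) :
    ∃ e : Fin (k + 1) ⊕ Fin 2 ≃ Fin (k + 3), (Hk1 a k).submatrix e e =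
      fromBlocks ((1 / 2 : ℝ) • (hilbertMatrix ℝ (k + 1) + vecMulVec 1 1)) (borderBlock (a ^ 2) k)
        (borderBlock (a ^ 2) k)ᵀ (cornerBlock (a ^ 2)) := by
  obtain ⟨e, Sidx_inl, Sidx_inr⟩ := exists_equiv_Sidx hk
  refine ⟨e, ?_⟩
  ext (i | i) (j | j) <;>
    simp only [submatrix_apply, Hk1, Sidx_inl, Sidx_inr, Prod.mk_add_mk, fromBlocks_apply₁₁,
      fromBlocks_apply₁₂, fromBlocks_apply₂₁, fromBlocks_apply₂₂, transpose_apply]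
  · simp [gfun_zero_right, hilbertMatrix, add_comm]
  · simp only [zero_add, gfun_succ_right, Nat.add_eq_zero_iff, Fin.val_eq_zero_iff]
    simp [borderBlock]
  · simp only [add_zero, gfun_succ_right, Nat.add_eq_zero_iff, Fin.val_eq_zero_iff]
    simp [borderBlock, and_comm]
  · rw [gfun_succ_right]
    fin_cases i <;> fin_cases j <;> simp [cornerBlock]

end BlockForm

section Constant

lemma superFactorial_mul_prod_Icc_factorial {m n : ℕ} (h : m ≤ n) :
    (sf m) * ∏ i ∈ Icc (m + 1) n, i ! = sf n := by
  simp only [← Nat.prod_range_succ_factorial]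
  rw [← Ico_add_one_right_eq_Icc, prod_range_mul_prod_Ico _ (by omega)]

lemma akConst_add_one (m : ℕ) :
    akConst (m + 1) = (sf m : ℝ) ^ 2 * (sf (m + 2) : ℝ) ^ 2 /
      (2 ^ m * (sf (2 * m + 3) : ℝ)) * (((m : ℝ) + 1) * (m + 3)) := by
  have middle : ∏ i ∈ Icc 2 (m + 2), i ! = sf (m + 2) := by
    simpa using superFactorial_mul_prod_Icc_factorial (show 1 ≤ m + 2 by omega)
  have tail : (sf (m + 2)) * ∏ i ∈ Icc (m + 3) (2 * m + 3), i ! = sf (2 * m + 3) :=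
    superFactorial_mul_prod_Icc_factorial (by omega)
  rw [akConst, Nat.add_sub_cancel, show m + 1 + 1 = m + 2 by ring, show m + 1 + 2 = m + 3 by ring,
    show 2 * (m + 1) + 1 = 2 * m + 3 by ring, ← tail]
  simp only [← Nat.cast_prod, middle, Nat.prod_Icc_factorial]
  have sf_ne : (sf (m + 2) : ℝ) ≠ 0 := by
    rw [← middle]
    exact_mod_cast prod_ne_zero_iff.2 fun i _ => Nat.factorial_ne_zero i
  push_cast
  field_simp
  ring

lemma akConst_eq_det_hilbertMatrix {k : ℕ} (hk : 1 ≤ k) :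
    akConst k = (1 / 2) ^ (k + 1) * (hilbertMatrix ℝ (k + 1)).det *
      (4 * ((k : ℝ) + 1) ^ 2) * (k * (k + 2)) := by
  obtain ⟨m, rfl⟩ := Nat.exists_eq_add_of_le' hk
  have half_pow : (1 / 2 : ℝ) ^ (m + 1 + 1) * 4 = (2 ^ m)⁻¹ := by
    rw [pow_succ, pow_succ, one_div, inv_pow]
    ring
  rw [mul_right_comm _ _ (4 * _), ← mul_assoc _ (4 : ℝ), half_pow, akConst_add_one,
    det_hilbertMatrix_succ, show 2 * (m + 1) + 1 = 2 * m + 3 by ring,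
    Nat.superFactorial_succ (m + 1), Nat.superFactorial_succ m, Nat.factorial_succ (m + 1)]
  push_cast
  field_simp
  ring

end Constant

theorem det_Hk1_formula_general (a : ℝ) {k : ℕ} (hk : 1 ≤ k) :
    (Hk1 a k).det =
      akConst k * (a ^ 2 * (a ^ 2 - 1) *
        ((1 - a ^ 2) * (1 / 2 - a ^ 2) + 1 / (4 * ((k : ℝ) + 1) ^ 2))) := by
  obtain ⟨e, block_form⟩ := exists_Hk1_submatrix_eq_fromBlocks a hk
  have schur_complement : (1 / 2 : ℝ) • (hilbertMatrix ℝ (k + 1) + vecMulVec 1 1) -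
      borderBlock (a ^ 2) k * cornerSolution ℝ k =
        (1 / 2 : ℝ) • (hilbertMatrix ℝ (k + 1) + (1 - 2 * a ^ 2) • vecMulVec 1 1 +
          (-2 * (1 - a ^ 2)) • vecMulVec (Pi.single 0 1) (Pi.single 0 1)) := by
    rw [borderBlock_mul_cornerSolution]
    module
  rw [← det_submatrix_equiv_self e, block_form, ← cornerBlock_mul_cornerSolution,
    det_fromBlocks_mul_right, det_cornerBlock, schur_complement, det_smul, Fintype.card_fin,
    det_hilbertMatrix_add_smul_add_smul, akConst_eq_det_hilbertMatrix hk]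
  field_simp
  ring

/-- For `0 < a ≤ 1/√2` and `k ≥ 2`:
`det H_k(1) = a_k · a²(a²−1)·((1−a²)(1/2−a²) + 1/(4(k+1)²))`. -/
theorem det_Hk1_formula (a : ℝ) (ha : 0 < a) (ha' : a ≤ 1 / Real.sqrt 2)
    (k : ℕ) (hk : 2 ≤ k) :
    (Hk1 a k).det =
      akConst k * (a ^ 2 * (a ^ 2 - 1) *
        ((1 - a ^ 2) * (1 / 2 - a ^ 2) + 1 / (4 * ((k : ℝ) + 1) ^ 2))) := by
  exact det_Hk1_formula_general a (one_le_two.trans hk)
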